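/- Fix β > 0 and K > 0 and suppose that z = 0 is the unique global minimum point of G_{β,K} over ℝ and that G_{β,K}''(0) > 0. Then, as n → ∞, the distributions of S_n/n^{1/2} under the canonical ensembles P_{n,β,K} converge weakly to the centered normal distribution N(0, σ²) with variance σ² = 2βK c_β''(0) / G_{β,K}''(0). -/

import Mathlib

noncomputable section

open scoped BigOperators

/-- `c_β(t) = log[(1 + e^{−β}(e^t + e^{−t}))/(1 + 2e^{−β})]`. -/
def cBeta (β t : ℝ) : ℝ :=
  Real.log ((1 + Real.exp (-β) * (Real.exp t + Real.exp (-t))) / (1 + 2 * Real.exp (-β)))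

/-- `G_{β,K}(z) = βK z² − c_β(2βK z)`. -/
def Gfun (β K z : ℝ) : ℝ := β * K * z ^ 2 - cBeta β (2 * β * K * z)

/-- The spin space `Λ = {-1, 0, 1} ⊆ ℤ`. -/
abbrev Spin : Type := ({-1, 0, 1} : Finset ℤ)

/-- The total spin `S_n(ω) = Σ_j ω_j` (as a real number). -/
def totalSpin (n : ℕ) (ω : Fin n → Spin) : ℝ := ∑ j, ((ω j : ℤ) : ℝ)

/-- The energy `H_{n,K}(ω) = Σ_j ω_j² − (K/n)(Σ_j ω_j)²`. -/
def ham (K : ℝ) (n : ℕ) (ω : Fin n → Spin) : ℝ :=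
  (∑ j, ((ω j : ℤ) : ℝ) ^ 2) - (K / n) * (∑ j, ((ω j : ℤ) : ℝ)) ^ 2

/-- The canonical ensemble `P_{n,β,K}`: the probability mass of a configuration
`ω ∈ Λⁿ` is proportional to `exp(−β H_{n,K}(ω))`. -/
def canonP (β K : ℝ) (n : ℕ) (ω : Fin n → Spin) : ℝ :=
  Real.exp (-β * ham K n ω) / ∑ ω' : Fin n → Spin, Real.exp (-β * ham K n ω')


/-!
Adding to `S_n / √n` an independent centered Gaussian of variance `1 / (2βK)` linearizes the
quadratic interaction (the Hubbard–Stratonovich transformation): the sum has a density proportional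
to `exp (-n G(x / √n))`. Since `G` vanishes to second order at its unique minimum point `0`, the
density converges to `exp (-G''(0) x² / 2)`, and a global bound `δ z² ≤ G z` provides the domination.
Dividing the limiting characteristic function by that of the added Gaussian leaves `N(0, σ²)` with
`σ² = 1 / G''(0) - 1 / (2βK)`.
-/

open Filter Topology MeasureTheory ProbabilityTheory

section CriticalPoint

variable {f : ℝ → ℝ}

theorem tendsto_sub_div_sq_of_deriv_eq_zero {x₀ : ℝ} (hf : ContDiff ℝ 2 f)
    (hf' : deriv f x₀ = 0) :
    Tendsto (fun x ↦ (f x - f x₀) / (x - x₀) ^ 2) (𝓝[≠] x₀) (𝓝 (iteratedDeriv 2 f x₀ / 2)) := by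
  have htaylor (x : ℝ) : taylorWithinEval f 2 Set.univ x₀ x
      = f x₀ + iteratedDeriv 2 f x₀ / 2 * (x - x₀) ^ 2 := by
    simp only [taylorWithinEval_succ, taylor_within_zero_eval, iteratedDerivWithin_univ,
      zero_add, iteratedDeriv_one, hf', smul_eq_mul, Nat.factorial]
    push_cast
    ring
  have hremainder := (Real.taylor_tendsto (n := 2) convex_univ (Set.mem_univ x₀)
    hf.contDiffOn).mono_left (nhdsWithin_mono x₀ (Set.subset_univ {x₀}ᶜ))
  rw [← zero_add (iteratedDeriv 2 f x₀ / 2)]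
  refine (hremainder.add_const (iteratedDeriv 2 f x₀ / 2)).congr' ?_
  filter_upwards [self_mem_nhdsWithin] with x (hx : x ≠ x₀)
  have : x - x₀ ≠ 0 := sub_ne_zero.2 hx
  rw [htaylor]
  field_simp
  ring

theorem iteratedDeriv_two_nonneg_of_isLocalMin {x₀ : ℝ} (hf : ContDiff ℝ 2 f)
    (hmin : IsLocalMin f x₀) : 0 ≤ iteratedDeriv 2 f x₀ := by
  have hlim := tendsto_sub_div_sq_of_deriv_eq_zero hf hmin.deriv_eq_zero
  have hquot : ∀ᶠ x in 𝓝[≠] x₀, 0 ≤ (f x - f x₀) / (x - x₀) ^ 2 := by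
    filter_upwards [hmin.filter_mono nhdsWithin_le_nhds] with x hx
    exact div_nonneg (sub_nonneg.2 hx) (sq_nonneg _)
  linarith [ge_of_tendsto hlim hquot]

theorem eventually_mul_sq_le_sub_of_lt_iteratedDeriv_two {x₀ δ : ℝ} (hf : ContDiff ℝ 2 f)
    (hf' : deriv f x₀ = 0) (hδ : δ < iteratedDeriv 2 f x₀ / 2) :
    ∀ᶠ x in 𝓝 x₀, δ * (x - x₀) ^ 2 ≤ f x - f x₀ := by
  have hpunctured := (tendsto_sub_div_sq_of_deriv_eq_zero hf hf').eventually_const_lt hδ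
  filter_upwards [eventually_nhdsWithin_iff.1 hpunctured] with x hx
  obtain rfl | hne := eq_or_ne x x₀
  · simp
  · have : 0 < (x - x₀) ^ 2 := by have := sub_ne_zero.2 hne; positivity
    exact ((lt_div_iff₀ this).1 (hx hne)).le

theorem tendsto_natCast_mul_comp_div_sqrt (hf : ContDiff ℝ 2 f) (hf0 : f 0 = 0)
    (hf' : deriv f 0 = 0) (x : ℝ) :
    Tendsto (fun n : ℕ ↦ n * f (x / √n)) atTop (𝓝 (iteratedDeriv 2 f 0 / 2 * x ^ 2)) := by
  obtain rfl | hx := eq_or_ne x 0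
  · simp [hf0]
  have hscale : Tendsto (fun n : ℕ ↦ x / √n) atTop (𝓝[≠] 0) := by
    refine tendsto_nhdsWithin_iff.2 ⟨tendsto_const_nhds.div_atTop
      (Real.tendsto_sqrt_atTop.comp tendsto_natCast_atTop_atTop), ?_⟩
    filter_upwards [eventually_gt_atTop 0] with n hn
    exact div_ne_zero hx (by positivity)
  refine (((tendsto_sub_div_sq_of_deriv_eq_zero hf hf').comp hscale).mul_const (x ^ 2)).congr'
    ?_
  filter_upwards [eventually_gt_atTop 0] with n hn
  simp only [Function.comp_apply, hf0, sub_zero, div_pow, Real.sq_sqrt (Nat.cast_nonneg n)]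
  field_simp

end CriticalPoint

section QuadraticBound

theorem exists_pos_forall_mul_le {X : Type*} [TopologicalSpace X] {f g : X → ℝ}
    (hg : ∀ x, 0 ≤ g x) (hnhds : ∀ x, ∃ δ > 0, ∀ᶠ y in 𝓝 x, δ * g y ≤ f y)
    (hcocompact : ∃ δ > 0, ∀ᶠ y in cocompact X, δ * g y ≤ f y) :
    ∃ δ > 0, ∀ x, δ * g x ≤ f x := by
  have hunion {s t : Set X} (hs : ∃ δ > 0, ∀ x ∈ s, δ * g x ≤ f x)
      (ht : ∃ δ > 0, ∀ x ∈ t, δ * g x ≤ f x) : ∃ δ > 0, ∀ x ∈ s ∪ t, δ * g x ≤ f x := by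
    obtain ⟨δ, hδ, hδs⟩ := hs
    obtain ⟨ε, hε, hεt⟩ := ht
    refine ⟨min δ ε, lt_min hδ hε, ?_⟩
    rintro x (hx | hx)
    · exact (mul_le_mul_of_nonneg_right (min_le_left δ ε) (hg x)).trans (hδs x hx)
    · exact (mul_le_mul_of_nonneg_right (min_le_right δ ε) (hg x)).trans (hεt x hx)
  obtain ⟨ε, hε, hfar⟩ := hcocompact
  obtain ⟨k, hk, hkfar⟩ := mem_cocompact.1 hfar
  have hnear : ∃ δ > 0, ∀ x ∈ k, δ * g x ≤ f x := by
    refine hk.induction_on ⟨1, one_pos, by simp⟩ ?_ (fun _ _ ↦ hunion) fun x _ ↦ ?_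
    · exact fun s t hst ⟨δ, hδ, h⟩ ↦ ⟨δ, hδ, fun x hx ↦ h x (hst hx)⟩
    · obtain ⟨δ, hδ, h⟩ := hnhds x
      exact ⟨_, mem_nhdsWithin_of_mem_nhds h, δ, hδ, fun _ hy ↦ hy⟩
  obtain ⟨δ, hδ, h⟩ := hunion hnear ⟨ε, hε, hkfar⟩
  exact ⟨δ, hδ, fun x ↦ h x (by simp)⟩

theorem exists_pos_forall_mul_sq_le {G : ℝ → ℝ} (hG : ContDiff ℝ 2 G) (hG0 : G 0 = 0)
    (hpos : ∀ z ≠ 0, 0 < G z) (hG2 : 0 < iteratedDeriv 2 G 0)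
    (hcocompact : ∃ δ > 0, ∀ᶠ z in cocompact ℝ, δ * z ^ 2 ≤ G z) :
    ∃ δ > 0, ∀ z, δ * z ^ 2 ≤ G z := by
  refine exists_pos_forall_mul_le sq_nonneg (fun z ↦ ?_) hcocompact
  obtain rfl | hz := eq_or_ne z 0
  · have hmin : IsLocalMin G 0 := Eventually.of_forall fun z ↦ by
      obtain rfl | hz := eq_or_ne z 0
      exacts [le_rfl, hG0.trans_le (hpos z hz).le]
    refine ⟨iteratedDeriv 2 G 0 / 4, by positivity, ?_⟩
    simpa [hG0] using eventually_mul_sq_le_sub_of_lt_iteratedDeriv_two hG hmin.deriv_eq_zero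
      (show iteratedDeriv 2 G 0 / 4 < iteratedDeriv 2 G 0 / 2 by linarith)
  · have hlt : G z / (2 * z ^ 2) * z ^ 2 < G z := by
      have := hpos z hz
      field_simp
      linarith
    have hleft : Continuous fun y : ℝ ↦ G z / (2 * z ^ 2) * y ^ 2 := by fun_prop
    refine ⟨G z / (2 * z ^ 2), div_pos (hpos z hz) (by positivity), ?_⟩
    exact (hleft.continuousAt.eventually_lt hG.continuous.continuousAt hlt).mono fun _ ↦ le_of_lt

end QuadraticBound

section Laplace

variable {G : ℝ → ℝ} {δ : ℝ}

theorem tendsto_integral_exp_neg_natCast_mul {E : Type*} [NormedAddCommGroup E] [NormedSpace ℝ E]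
    {φ : ℝ → E} {C : ℝ} (hG : ContDiff ℝ 2 G) (hG0 : G 0 = 0) (hδ : 0 < δ)
    (hbound : ∀ z, δ * z ^ 2 ≤ G z) (hφ : AEStronglyMeasurable φ) (hC : ∀ᵐ x, ‖φ x‖ ≤ C) :
    Tendsto (fun n : ℕ ↦ ∫ x, Real.exp (-(n * G (x / √n))) • φ x) atTop
      (𝓝 (∫ x, Real.exp (-(iteratedDeriv 2 G 0 / 2 * x ^ 2)) • φ x)) := by
  have hG' : deriv G 0 = 0 := IsLocalMin.deriv_eq_zero <| Eventually.of_forall fun z ↦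
    hG0.trans_le ((by positivity : 0 ≤ δ * z ^ 2).trans (hbound z))
  refine tendsto_integral_filter_of_dominated_convergence
    (fun x ↦ Real.exp (-δ * x ^ 2) * C) (Eventually.of_forall fun n ↦ ?_) ?_
    ((integrable_exp_neg_mul_sq hδ).mul_const C) (Eventually.of_forall fun x ↦ ?_)
  · have : Continuous fun x ↦ Real.exp (-(n * G (x / √n))) := by
      have := hG.continuous
      fun_prop
    exact this.aestronglyMeasurable.smul hφ
  · filter_upwards [eventually_gt_atTop 0] with n hn
    filter_upwards [hC] with x hx
    have hexponent : δ * x ^ 2 ≤ n * G (x / √n) := calc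
      δ * x ^ 2 = n * (δ * (x / √n) ^ 2) := by
        rw [div_pow, Real.sq_sqrt (Nat.cast_nonneg n)]
        field_simp
      _ ≤ n * G (x / √n) := mul_le_mul_of_nonneg_left (hbound _) (Nat.cast_nonneg n)
    rw [norm_smul, Real.norm_of_nonneg (Real.exp_nonneg _)]
    gcongr
    linarith
  · exact ((tendsto_natCast_mul_comp_div_sqrt hG hG0 hG' x).neg.rexp).smul_const (φ x)

/-- The Fourier transform at `t` of the unnormalized density `x ↦ exp (-n G(x / √n))`, whose
quotient by its value at `0` is a characteristic function. -/
def laplaceFourier (G : ℝ → ℝ) (n : ℕ) (t : ℝ) : ℂ :=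
  ∫ x : ℝ, Real.exp (-(n * G (x / √n))) • Complex.exp (Complex.I * t * x)

theorem integral_exp_neg_mul_sq_smul_cexp {b : ℝ} (hb : 0 < b) (t : ℝ) :
    ∫ x : ℝ, Real.exp (-(b * x ^ 2)) • Complex.exp (Complex.I * t * x)
      = (Real.pi / b : ℂ) ^ (1 / 2 : ℂ) * Complex.exp (-t ^ 2 / (4 * b)) := by
  rw [← fourierIntegral_gaussian (by simpa using hb) t]
  congr 1 with x
  simp [Complex.real_smul, mul_comm]

theorem cpow_half_pi_div_ne_zero {b : ℝ} (hb : b ≠ 0) :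
    (Real.pi / b : ℂ) ^ (1 / 2 : ℂ) ≠ 0 := by
  simp [Complex.cpow_eq_zero_iff, hb, Real.pi_ne_zero]

theorem tendsto_laplaceFourier_div (hG : ContDiff ℝ 2 G) (hG0 : G 0 = 0)
    (hG2 : 0 < iteratedDeriv 2 G 0) (hδ : 0 < δ) (hbound : ∀ z, δ * z ^ 2 ≤ G z) (t : ℝ) :
    Tendsto (fun n ↦ laplaceFourier G n t / laplaceFourier G n 0) atTop
      (𝓝 (Complex.exp (-t ^ 2 / (2 * iteratedDeriv 2 G 0)))) := by
  set A := iteratedDeriv 2 G 0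
  have hlim (s : ℝ) : Tendsto (fun n ↦ laplaceFourier G n s) atTop
      (𝓝 ((Real.pi / (A / 2 : ℝ) : ℂ) ^ (1 / 2 : ℂ) *
        Complex.exp (-s ^ 2 / (4 * (A / 2 : ℝ))))) := by
    rw [← integral_exp_neg_mul_sq_smul_cexp (half_pos hG2)]
    exact tendsto_integral_exp_neg_natCast_mul (C := 1) hG hG0 hδ hbound (by fun_prop)
      (Eventually.of_forall fun x ↦ by simp [Complex.norm_exp])
  have hpi := cpow_half_pi_div_ne_zero (half_pos hG2).ne'
  have hquot := (hlim t).div (hlim 0) (mul_ne_zero hpi (Complex.exp_ne_zero _))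
  rw [mul_div_mul_left _ _ hpi] at hquot
  have hexp (s : ℝ) : -(s : ℂ) ^ 2 / (4 * (A / 2 : ℝ)) = -s ^ 2 / (2 * A) := by
    push_cast
    ring
  simp only [hexp, Complex.ofReal_zero, zero_pow two_ne_zero, neg_zero, zero_div,
    Complex.exp_zero, div_one] at hquot
  exact hquot

end Laplace

section FreeEnergy

variable (β K : ℝ)

theorem one_le_cBeta_arg (t : ℝ) :
    1 ≤ (1 + Real.exp (-β) * (Real.exp t + Real.exp (-t))) / (1 + 2 * Real.exp (-β)) := by
  rw [one_le_div (by positivity)]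
  have : 1 ≤ (Real.exp t + Real.exp (-t)) / 2 := Real.cosh_eq t ▸ Real.one_le_cosh t
  nlinarith [Real.exp_pos (-β)]

theorem contDiff_cBeta {m : WithTop ℕ∞} : ContDiff ℝ m (cBeta β) := by
  unfold cBeta
  refine ContDiff.log (by fun_prop) fun t ↦ ?_
  exact (one_pos.trans_le (one_le_cBeta_arg β t)).ne'

@[simp]
theorem cBeta_zero : cBeta β 0 = 0 := by
  have : 1 + Real.exp (-β) * (1 + 1) = 1 + 2 * Real.exp (-β) := by ring
  have h2 : 1 + 2 * Real.exp (-β) ≠ 0 := by positivity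
  simp [cBeta, this, h2]

theorem cBeta_nonneg (t : ℝ) : 0 ≤ cBeta β t :=
  Real.log_nonneg (one_le_cBeta_arg β t)

theorem cBeta_le_abs (t : ℝ) : cBeta β t ≤ |t| := by
  rw [cBeta, Real.log_le_iff_le_exp (one_pos.trans_le (one_le_cBeta_arg β t)),
    div_le_iff₀ (by positivity)]
  have hone : 1 ≤ Real.exp |t| := Real.one_le_exp (abs_nonneg t)
  have hexp : Real.exp t ≤ Real.exp |t| := Real.exp_le_exp.2 (le_abs_self t)
  have hexp_neg : Real.exp (-t) ≤ Real.exp |t| := Real.exp_le_exp.2 (neg_le_abs t)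
  nlinarith [Real.exp_pos (-β)]

theorem iteratedDeriv_two_cBeta_zero_nonneg : 0 ≤ iteratedDeriv 2 (cBeta β) 0 :=
  iteratedDeriv_two_nonneg_of_isLocalMin (contDiff_cBeta β) <|
    Eventually.of_forall fun t ↦ (cBeta_zero β).trans_le (cBeta_nonneg β t)

theorem contDiff_Gfun {m : WithTop ℕ∞} : ContDiff ℝ m (Gfun β K) := by
  have := contDiff_cBeta β (m := m)
  unfold Gfun
  fun_prop

@[simp]
theorem Gfun_zero : Gfun β K 0 = 0 := by simp [Gfun]

theorem iteratedDeriv_two_Gfun_zero :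
    iteratedDeriv 2 (Gfun β K) 0
      = 2 * β * K - (2 * β * K) ^ 2 * iteratedDeriv 2 (cBeta β) 0 := by
  have hc : ContDiff ℝ 2 (cBeta β) := contDiff_cBeta β
  have hsub : Gfun β K = (fun z ↦ β * K * z ^ 2) - fun z ↦ cBeta β (2 * β * K * z) := rfl
  rw [hsub, iteratedDeriv_sub (by fun_prop) (by fun_prop), iteratedDeriv_const_mul_field,
    iteratedDeriv_comp_const_mul hc, iteratedDeriv_fun_pow_zero]
  simp only [if_true, Nat.factorial_two, Nat.cast_ofNat, mul_zero]
  ring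

variable {β K}

theorem mul_pos_of_iteratedDeriv_two_Gfun_pos (hG : 0 < iteratedDeriv 2 (Gfun β K) 0) :
    0 < β * K := by
  rw [iteratedDeriv_two_Gfun_zero] at hG
  nlinarith [mul_nonneg (sq_nonneg (2 * β * K)) (iteratedDeriv_two_cBeta_zero_nonneg β)]

theorem eventually_cocompact_mul_sq_le_Gfun (ha : 0 < β * K) :
    ∀ᶠ z in cocompact ℝ, β * K / 2 * z ^ 2 ≤ Gfun β K z := by
  filter_upwards [(tendsto_norm_cocompact_atTop (E := ℝ)).eventually_ge_atTop 4] with z hz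
  have hc : cBeta β (2 * β * K * z) ≤ 2 * (β * K) * |z| := by
    rw [← abs_of_pos (by linarith : 0 < 2 * (β * K)), ← abs_mul, ← mul_assoc 2 β K]
    exact cBeta_le_abs β (2 * β * K * z)
  have hlin : 4 * (β * K * |z|) ≤ |z| * (β * K * |z|) :=
    mul_le_mul_of_nonneg_right hz (by positivity)
  rw [Gfun, ← sq_abs z]
  linarith

theorem exists_pos_forall_mul_sq_le_Gfun (hmin0 : IsMinOn (Gfun β K) Set.univ 0)
    (huniq : ∀ z : ℝ, IsMinOn (Gfun β K) Set.univ z → z = 0)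
    (hG : 0 < iteratedDeriv 2 (Gfun β K) 0) :
    ∃ δ > 0, ∀ z, δ * z ^ 2 ≤ Gfun β K z := by
  have ha := mul_pos_of_iteratedDeriv_two_Gfun_pos hG
  refine exists_pos_forall_mul_sq_le (contDiff_Gfun β K) (Gfun_zero β K) (fun z hz ↦ ?_) hG
    ⟨β * K / 2, half_pos ha, eventually_cocompact_mul_sq_le_Gfun ha⟩
  by_contra! hle
  rw [← Gfun_zero β K] at hle
  exact hz (huniq z fun y hy ↦ hle.trans (hmin0 hy))

variable (β K) in
/-- The variance `σ² = 2βK c_β''(0) / G_{β,K}''(0)` of the limiting normal distribution. -/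
def limitVariance : ℝ :=
  2 * β * K * iteratedDeriv 2 (cBeta β) 0 / iteratedDeriv 2 (Gfun β K) 0

theorem limitVariance_nonneg (hG : 0 < iteratedDeriv 2 (Gfun β K) 0) : 0 ≤ limitVariance β K := by
  have ha := mul_pos_of_iteratedDeriv_two_Gfun_pos hG
  have hc := iteratedDeriv_two_cBeta_zero_nonneg β
  rw [limitVariance, mul_assoc 2 β K]
  positivity

theorem limitVariance_eq_inv_sub_inv (hG : 0 < iteratedDeriv 2 (Gfun β K) 0) :
    limitVariance β K = (iteratedDeriv 2 (Gfun β K) 0)⁻¹ - (2 * (β * K))⁻¹ := by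
  have ha : 2 * (β * K) ≠ 0 :=
    mul_ne_zero two_ne_zero (mul_pos_of_iteratedDeriv_two_Gfun_pos hG).ne'
  rw [limitVariance, inv_sub_inv hG.ne' ha, div_eq_div_iff hG.ne' (mul_ne_zero hG.ne' ha),
    iteratedDeriv_two_Gfun_zero]
  ring

end FreeEnergy

section SpinLaw

instance : Nonempty Spin := ⟨⟨0, by simp⟩⟩

variable (β K : ℝ) (n : ℕ)

/-- The partition function `Σ_ω exp (-β H_{n,K}(ω))`. -/
def partitionFun : ℝ := ∑ ω : Fin n → Spin, Real.exp (-β * ham K n ω)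

theorem partitionFun_pos : 0 < partitionFun β K n :=
  Finset.sum_pos (fun _ _ ↦ Real.exp_pos _) Finset.univ_nonempty

theorem canonP_eq (ω : Fin n → Spin) :
    canonP β K n ω = Real.exp (-β * ham K n ω) / partitionFun β K n := rfl

theorem canonP_nonneg (ω : Fin n → Spin) : 0 ≤ canonP β K n ω :=
  div_nonneg (Real.exp_pos _).le (partitionFun_pos β K n).le

theorem sum_canonP : ∑ ω : Fin n → Spin, canonP β K n ω = 1 := by
  simp only [canonP_eq, ← Finset.sum_div]
  exact div_self (partitionFun_pos β K n).ne'

/-- The distribution of `S_n / √n` under the canonical ensemble `P_{n,β,K}`. -/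
def scaledSpinLaw : Measure ℝ :=
  ∑ ω : Fin n → Spin, ENNReal.ofReal (canonP β K n ω) • Measure.dirac (totalSpin n ω / √n)

instance isProbabilityMeasure_scaledSpinLaw : IsProbabilityMeasure (scaledSpinLaw β K n) where
  measure_univ := by
    simp [scaledSpinLaw, ← ENNReal.ofReal_sum_of_nonneg fun ω _ ↦ canonP_nonneg β K n ω,
      sum_canonP]

theorem integral_scaledSpinLaw {E : Type*} [NormedAddCommGroup E] [NormedSpace ℝ E]
    [CompleteSpace E] (g : ℝ → E) :
    ∫ x, g x ∂(scaledSpinLaw β K n)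
      = ∑ ω : Fin n → Spin, canonP β K n ω • g (totalSpin n ω / √n) := by
  rw [scaledSpinLaw, integral_finsetSum_measure fun ω _ ↦
    (integrable_dirac (by simp)).smul_measure ENNReal.ofReal_ne_top]
  simp [integral_smul_measure, ENNReal.toReal_ofReal, canonP_nonneg]

theorem partitionFun_mul_charFun_scaledSpinLaw (t : ℝ) :
    partitionFun β K n * charFun (scaledSpinLaw β K n) t
      = ∑ ω : Fin n → Spin, (Real.exp (-β * ham K n ω) : ℂ) *
          Complex.exp (Complex.I * t * (totalSpin n ω / √n : ℝ)) := by
  rw [charFun_apply_real, integral_scaledSpinLaw, Finset.mul_sum]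
  refine Finset.sum_congr rfl fun ω _ ↦ ?_
  have hZ : (partitionFun β K n : ℂ) ≠ 0 := by exact_mod_cast (partitionFun_pos β K n).ne'
  rw [canonP_eq, Complex.real_smul, Complex.ofReal_div]
  field_simp

end SpinLaw

section HubbardStratonovich

theorem integral_exp_quadratic_smul_cexp {a : ℝ} (ha : 0 < a) (s t : ℝ) :
    ∫ x : ℝ, Real.exp (-a * x ^ 2 + 2 * a * s * x) • Complex.exp (Complex.I * t * x)
      = (Real.pi / a : ℂ) ^ (1 / 2 : ℂ) * Complex.exp (-t ^ 2 / (4 * a)) *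
          (Real.exp (a * s ^ 2) * Complex.exp (Complex.I * t * s)) := by
  have hac : (a : ℂ) ≠ 0 := by exact_mod_cast ha.ne'
  have hquad := integral_cexp_quadratic (b := -(a : ℂ)) (by simpa using ha)
    (2 * a * s + Complex.I * t) 0
  have hexponent : (0 : ℂ) - (2 * a * s + Complex.I * t) ^ 2 / (4 * -a)
      = -t ^ 2 / (4 * a) + (a * s ^ 2 + Complex.I * t * s) := by
    field_simp
    linear_combination (t : ℂ) ^ 2 * Complex.I_sq
  rw [neg_neg, hexponent, Complex.exp_add, Complex.exp_add, ← mul_assoc] at hquad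
  push_cast
  rw [← hquad]
  congr 1 with x
  rw [Complex.real_smul]
  push_cast
  rw [← Complex.exp_add]
  ring_nf

theorem integrable_exp_quadratic_smul_cexp {a : ℝ} (ha : 0 < a) (s t : ℝ) :
    Integrable fun x : ℝ ↦
      Real.exp (-a * x ^ 2 + 2 * a * s * x) • Complex.exp (Complex.I * t * x) := by
  refine (integrable_cexp_quadratic' (b := -(a : ℂ)) (by simpa using ha)
    (2 * a * s + Complex.I * t) 0).congr (Eventually.of_forall fun x ↦ ?_)
  simp only [Complex.real_smul]
  push_cast
  rw [← Complex.exp_add]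
  ring_nf

variable (β K : ℝ) (n : ℕ)

theorem exp_cBeta (t : ℝ) :
    Real.exp (cBeta β t)
      = (∑ s : Spin, Real.exp (-β * (s : ℤ) ^ 2 + t * (s : ℤ))) / (1 + 2 * Real.exp (-β)) := by
  rw [cBeta, Real.exp_log (one_pos.trans_le (one_le_cBeta_arg β t)),
    Finset.sum_coe_sort {-1, 0, 1} fun k : ℤ ↦ Real.exp (-β * k ^ 2 + t * k),
    Finset.sum_insert (by simp), Finset.sum_insert (by simp), Finset.sum_singleton]
  simp [Real.exp_add, mul_add, mul_comm, add_assoc, add_comm]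

theorem exp_natCast_mul_cBeta (t : ℝ) :
    Real.exp (n * cBeta β t)
      = (∑ ω : Fin n → Spin, Real.exp (-β * ∑ j, ((ω j : ℤ) : ℝ) ^ 2 + t * totalSpin n ω)) /
          (1 + 2 * Real.exp (-β)) ^ n := by
  rw [Real.exp_nat_mul, exp_cBeta, div_pow, Finset.sum_pow', Fintype.piFinset_univ]
  simp only [← Real.exp_sum, Finset.sum_add_distrib, ← Finset.mul_sum, totalSpin]

variable {n}

theorem exp_neg_natCast_mul_Gfun (hn : n ≠ 0) (x : ℝ) :
    Real.exp (-(n * Gfun β K (x / √n)))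
      = (∑ ω : Fin n → Spin, Real.exp (-β * ∑ j, ((ω j : ℤ) : ℝ) ^ 2) *
          Real.exp (-(β * K) * x ^ 2 + 2 * (β * K) * (totalSpin n ω / √n) * x)) /
          (1 + 2 * Real.exp (-β)) ^ n := by
  have hsplit : -(n * Gfun β K (x / √n))
      = -(β * K) * x ^ 2 + n * cBeta β (2 * β * K * (x / √n)) := by
    rw [Gfun, div_pow, Real.sq_sqrt (Nat.cast_nonneg n)]
    field_simp
    ring
  rw [hsplit, Real.exp_add, exp_natCast_mul_cBeta, mul_div_assoc', Finset.mul_sum]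
  congr! 2 with ω
  rw [← Real.exp_add, ← Real.exp_add]
  ring_nf

theorem neg_mul_ham (ω : Fin n → Spin) :
    -β * ham K n ω
      = -β * ∑ j, ((ω j : ℤ) : ℝ) ^ 2 + β * K * (totalSpin n ω / √n) ^ 2 := by
  rw [ham, totalSpin, div_pow, Real.sq_sqrt (Nat.cast_nonneg n)]
  ring

variable {β K}

theorem laplaceFourier_Gfun (ha : 0 < β * K) (hn : n ≠ 0) (t : ℝ) :
    laplaceFourier (Gfun β K) n t
      = (Real.pi / (β * K : ℝ) : ℂ) ^ (1 / 2 : ℂ) / ((1 + 2 * Real.exp (-β)) ^ n : ℝ) *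
          partitionFun β K n *
          (Complex.exp (-t ^ 2 / (4 * (β * K : ℝ))) * charFun (scaledSpinLaw β K n) t) := by
  have hexpand (x : ℝ) : Real.exp (-(n * Gfun β K (x / √n))) • Complex.exp (Complex.I * t * x)
      = ((1 + 2 * Real.exp (-β)) ^ n)⁻¹ • ∑ ω : Fin n → Spin,
          Real.exp (-β * ∑ j, ((ω j : ℤ) : ℝ) ^ 2) •
            (Real.exp (-(β * K) * x ^ 2 + 2 * (β * K) * (totalSpin n ω / √n) * x) •
              Complex.exp (Complex.I * t * x)) := by
    rw [exp_neg_natCast_mul_Gfun β K hn, div_eq_inv_mul, mul_smul, Finset.sum_smul]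
    simp only [mul_smul]
  have hint (ω : Fin n → Spin) (_ : ω ∈ Finset.univ) : Integrable fun x : ℝ ↦
      Real.exp (-β * ∑ j, ((ω j : ℤ) : ℝ) ^ 2) •
        (Real.exp (-(β * K) * x ^ 2 + 2 * (β * K) * (totalSpin n ω / √n) * x) •
          Complex.exp (Complex.I * t * x)) :=
    (integrable_exp_quadratic_smul_cexp ha (totalSpin n ω / √n) t).smul
      (Real.exp (-β * ∑ j, ((ω j : ℤ) : ℝ) ^ 2))
  rw [mul_assoc, mul_left_comm (partitionFun β K n : ℂ), partitionFun_mul_charFun_scaledSpinLaw,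
    ← mul_assoc, Finset.mul_sum]
  simp only [laplaceFourier, hexpand, integral_smul]
  rw [integral_finsetSum Finset.univ hint, Finset.smul_sum]
  refine Finset.sum_congr rfl fun ω _ ↦ ?_
  rw [integral_smul, integral_exp_quadratic_smul_cexp ha, neg_mul_ham, Real.exp_add]
  simp only [Complex.real_smul, Complex.ofReal_mul, Complex.ofReal_inv]
  ring

theorem charFun_scaledSpinLaw (ha : 0 < β * K) (hn : n ≠ 0) (t : ℝ) :
    charFun (scaledSpinLaw β K n) t
      = Complex.exp (t ^ 2 / (4 * (β * K : ℝ))) *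
          (laplaceFourier (Gfun β K) n t / laplaceFourier (Gfun β K) n 0) := by
  have hfactor : (Real.pi / (β * K : ℝ) : ℂ) ^ (1 / 2 : ℂ) /
      ((1 + 2 * Real.exp (-β)) ^ n : ℝ) * partitionFun β K n ≠ 0 := by
    have hbase : (1 + 2 * Real.exp (-β)) ^ n ≠ 0 := by positivity
    exact mul_ne_zero (div_ne_zero (cpow_half_pi_div_ne_zero ha.ne')
      (Complex.ofReal_ne_zero.2 hbase)) (Complex.ofReal_ne_zero.2 (partitionFun_pos β K n).ne')
  rw [laplaceFourier_Gfun ha hn, laplaceFourier_Gfun ha hn, mul_div_mul_left _ _ hfactor]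
  simp only [Complex.ofReal_zero, charFun_zero, probReal_univ, Complex.ofReal_one,
    zero_pow two_ne_zero, neg_zero, zero_div, Complex.exp_zero, mul_one, div_one]
  rw [← mul_assoc, ← Complex.exp_add, neg_div, add_neg_cancel, Complex.exp_zero, one_mul]

end HubbardStratonovich

section CentralLimit

variable {β K : ℝ}

theorem tendsto_charFun_scaledSpinLaw (hmin0 : IsMinOn (Gfun β K) Set.univ 0)
    (huniq : ∀ z : ℝ, IsMinOn (Gfun β K) Set.univ z → z = 0)
    (hG : 0 < iteratedDeriv 2 (Gfun β K) 0) (t : ℝ) :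
    Tendsto (fun n ↦ charFun (scaledSpinLaw β K n) t) atTop
      (𝓝 (charFun (gaussianReal 0 (limitVariance β K).toNNReal) t)) := by
  have ha := mul_pos_of_iteratedDeriv_two_Gfun_pos hG
  obtain ⟨δ, hδ, hbound⟩ := exists_pos_forall_mul_sq_le_Gfun hmin0 huniq hG
  have hlimit : charFun (gaussianReal 0 (limitVariance β K).toNNReal) t
      = Complex.exp (t ^ 2 / (4 * (β * K : ℝ))) *
          Complex.exp (-t ^ 2 / (2 * iteratedDeriv 2 (Gfun β K) 0)) := by
    rw [charFun_gaussianReal, Real.coe_toNNReal _ (limitVariance_nonneg hG),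
      limitVariance_eq_inv_sub_inv hG, ← Complex.exp_add]
    congr 1
    push_cast
    ring
  rw [hlimit]
  refine ((tendsto_laplaceFourier_div (contDiff_Gfun β K) (Gfun_zero β K) hG hδ hbound
    t).const_mul _).congr' ?_
  filter_upwards [eventually_ne_atTop 0] with n hn
  exact (charFun_scaledSpinLaw ha hn t).symm

theorem clt_total_spin_general (β K : ℝ)
    (hmin0 : IsMinOn (Gfun β K) Set.univ 0)
    (huniq : ∀ z : ℝ, IsMinOn (Gfun β K) Set.univ z → z = 0)
    (hG : 0 < iteratedDeriv 2 (Gfun β K) 0) (f : ℝ → ℝ) (hf : Continuous f)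
    (hbdd : ∃ C : ℝ, ∀ x, |f x| ≤ C) :
    Tendsto (fun n : ℕ ↦ ∑ ω : Fin n → Spin, canonP β K n ω * f (totalSpin n ω / √n)) atTop
      (𝓝 (∫ x, f x ∂(gaussianReal 0 (Real.toNNReal
        (2 * β * K * iteratedDeriv 2 (cBeta β) 0 / iteratedDeriv 2 (Gfun β K) 0))))) := by
  obtain ⟨C, hC⟩ := hbdd
  let law (n : ℕ) : ProbabilityMeasure ℝ := ⟨scaledSpinLaw β K n, inferInstance⟩
  let limitLaw : ProbabilityMeasure ℝ :=
    ⟨gaussianReal 0 (limitVariance β K).toNNReal, inferInstance⟩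
  have hweak : Tendsto law atTop (𝓝 limitLaw) :=
    ProbabilityMeasure.tendsto_of_tendsto_charFun (tendsto_charFun_scaledSpinLaw hmin0 huniq hG)
  have hintegral := ProbabilityMeasure.tendsto_iff_forall_integral_tendsto.1 hweak
    (BoundedContinuousFunction.ofNormedAddCommGroup f hf C hC)
  simpa [law, limitLaw, limitVariance, integral_scaledSpinLaw] using hintegral

end CentralLimit

/-- Suppose `z = 0` is the unique global minimum point of `G_{β,K}`
and `G_{β,K}''(0) > 0`.  Then the distributions of `S_n/n^{1/2}` under `P_{n,β,K}`
converge weakly (tested against bounded continuous functions) to the centered Gaussian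
with variance `σ² = 2βK c_β''(0)/G_{β,K}''(0)`. -/
theorem clt_total_spin (β K : ℝ) (hβ : 0 < β) (hK : 0 < K)
    (hmin0 : IsMinOn (Gfun β K) Set.univ 0)
    (huniq : ∀ z : ℝ, IsMinOn (Gfun β K) Set.univ z → z = 0)
    (hG : 0 < iteratedDeriv 2 (Gfun β K) 0) :
    ∀ f : ℝ → ℝ, Continuous f → (∃ C : ℝ, ∀ x, |f x| ≤ C) →
      Filter.Tendsto (fun n : ℕ =>
          ∑ ω : Fin n → Spin, canonP β K n ω * f (totalSpin n ω / Real.sqrt n))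
        Filter.atTop
        (nhds (∫ x, f x ∂(ProbabilityTheory.gaussianReal 0
          (Real.toNNReal (2 * β * K * iteratedDeriv 2 (cBeta β) 0 /
            iteratedDeriv 2 (Gfun β K) 0))))) :=
  clt_total_spin_general β K hmin0 huniq hG
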